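/- Let α be a Pisot number. Then the set 𝓛(α) = { limsup_{n→∞} ‖ξ·α^n‖ : ξ ∈ ℝ } is a closed subset of [0, 1/2]. -/

import Mathlib

/-- Distance from `x` to the nearest integer. -/
noncomputable def distNearestInt (x : ℝ) : ℝ := |x - round x|

/-- `limsup_{n→∞} ‖ξ·α^n‖`. -/
noncomputable def limsupDist (α ξ : ℝ) : ℝ :=
  Filter.limsup (fun n : ℕ => distNearestInt (ξ * α ^ n)) Filter.atTop

/-- The multiplicative Markoff–Lagrange spectrum `𝓛(α)`. -/
noncomputable def specL (α : ℝ) : Set ℝ := {l : ℝ | ∃ ξ : ℝ, limsupDist α ξ = l}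

/-- A Pisot number: a real algebraic integer `α > 1` all of whose conjugates other
than `α` itself have complex absolute value `< 1`. -/
def IsPisot (α : ℝ) : Prop :=
  1 < α ∧ IsIntegral ℤ α ∧
    ∀ z : ℂ, Polynomial.aeval z (minpoly ℤ α) = 0 → z ≠ (α : ℂ) → ‖z‖ < 1

/-!
For a continuous observable on a compact space, the upper limit along an orbit is its greatest value
on the cluster points of the orbit. A limit of such values is therefore the value at some point `x`
near which orbit segments begin and end along which the observable hardly exceeds its value at `x`.
Concatenating ever better segments produces a pseudo-orbit whose jumps tend to zero, and if every
such pseudo-orbit is asymptotic to a true orbit, the limit value is attained.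

This limit shadowing property holds for the sequences `ξ α ^ n` modulo one under the shift. A
pseudo-orbit is a sequence modulo one which asymptotically satisfies the linear recurrence of the
minimal polynomial of `α`. Since that polynomial is monic, integer corrections lift it to a real
sequence with the same property; the contracting conjugates contribute only a null sequence, and the
single expanding root `α` leaves a sequence asymptotic to `ξ α ^ n`.
-/

open Filter Topology Polynomial Uniformity Set

section ClusterPoints

variable {ι X : Type*} {F : Filter ι} {u v : ι → X}

lemma image_setOf_mapClusterPt {Y : Type*} [TopologicalSpace X] [CompactSpace X]
    [TopologicalSpace Y] [T2Space Y] {f : X → Y} (hf : Continuous f) :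
    f '' {x | MapClusterPt x F u} = {y | MapClusterPt y F (f ∘ u)} := by
  refine Subset.antisymm ?_ fun y hy => ?_
  · rintro _ ⟨x, hx, rfl⟩
    exact hx.continuousAt_comp hf.continuousAt
  · obtain ⟨x, hxy, hx⟩ := hf.isProperMap.clusterPt_of_mapClusterPt (ℱ := map u F) hy
    exact ⟨x, hx, hxy⟩

lemma isGreatest_limsup_comp {R : Type*} [TopologicalSpace X] [CompactSpace X]
    [ConditionallyCompleteLinearOrder R] [TopologicalSpace R] [OrderTopology R] [NeBot F]
    {f : X → R} (hf : Continuous f) :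
    IsGreatest (f '' {x | MapClusterPt x F u}) (limsup (f ∘ u) F) := by
  obtain ⟨a, ha⟩ := (isCompact_range hf).bddBelow
  obtain ⟨b, hb⟩ := (isCompact_range hf).bddAbove
  have hge : IsBoundedUnder (· ≥ ·) F (f ∘ u) := isBoundedUnder_of ⟨a, fun i => ha ⟨u i, rfl⟩⟩
  have hle : IsBoundedUnder (· ≤ ·) F (f ∘ u) := isBoundedUnder_of ⟨b, fun i => hb ⟨u i, rfl⟩⟩
  rw [image_setOf_mapClusterPt hf]
  exact isGreatest_mapClusterPt_limsup hge.isCoboundedUnder_le hle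

lemma mapClusterPt_of_tendsto_uniformity [UniformSpace X] {x : X} (hu : MapClusterPt x F u)
    (huv : Tendsto (fun i => (u i, v i)) F (𝓤 X)) : MapClusterPt x F v := by
  rw [mapClusterPt_iff_frequently]
  intro s hs
  obtain ⟨V, hV, hVs⟩ := UniformSpace.mem_nhds_iff.1 hs
  obtain ⟨W, hW, hWV⟩ := comp_mem_uniformity_sets hV
  refine ((hu.frequently (UniformSpace.ball_mem_nhds x hW)).and_eventually (huv hW)).mono ?_
  rintro i ⟨hxu, huv⟩
  exact hVs (hWV ⟨u i, hxu, huv⟩)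

lemma limsup_comp_eq_of_tendsto_uniformity {R : Type*} [UniformSpace X] [CompactSpace X]
    [ConditionallyCompleteLinearOrder R] [TopologicalSpace R] [OrderTopology R] [NeBot F]
    {f : X → R} (hf : Continuous f) (huv : Tendsto (fun i => (u i, v i)) F (𝓤 X)) :
    limsup (f ∘ u) F = limsup (f ∘ v) F := by
  have hvu : Tendsto (fun i => (v i, u i)) F (𝓤 X) := tendsto_swap_uniformity.comp huv
  have hclusters : {x | MapClusterPt x F u} = {x | MapClusterPt x F v} :=
    Set.ext fun x => ⟨fun hx => mapClusterPt_of_tendsto_uniformity hx huv,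
      fun hx => mapClusterPt_of_tendsto_uniformity hx hvu⟩
  refine (isGreatest_limsup_comp hf).unique ?_
  rw [hclusters]
  exact isGreatest_limsup_comp hf

end ClusterPoints

/-- Lays out consecutive blocks of lengths `m 0, m 1, …` along `ℕ`: the value at `n` is the index
of the block containing `n`, together with the offset of `n` in that block. -/
def blockPos (m : ℕ → ℕ) : ℕ → ℕ × ℕ
  | 0 => (0, 0)
  | n + 1 =>
    let s := blockPos m n
    if s.2 + 1 < m s.1 then (s.1, s.2 + 1) else (s.1 + 1, 0)

section blockPos

variable {m : ℕ → ℕ}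

lemma blockPos_snd_lt (hm : ∀ k, 0 < m k) (n : ℕ) : (blockPos m n).2 < m (blockPos m n).1 := by
  cases n with
  | zero => exact hm 0
  | succ n =>
    rw [blockPos]
    split_ifs with h
    · exact h
    · exact hm _

lemma blockPos_sum_add (hm : ∀ k, 0 < m k) (k j : ℕ) (hj : j < m k) :
    blockPos m (∑ i ∈ Finset.range k, m i + j) = (k, j) := by
  induction k generalizing j with
  | zero =>
    induction j with
    | zero => rfl
    | succ j ih => rw [← add_assoc, blockPos, ih (by omega), if_pos hj]
  | succ k ihk =>
    induction j with
    | zero =>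
      have hk := hm k
      have hprev : ∑ i ∈ Finset.range (k + 1), m i =
          ∑ i ∈ Finset.range k, m i + (m k - 1) + 1 := by
        rw [Finset.sum_range_succ]; omega
      rw [add_zero, hprev, blockPos, ihk _ (by omega), if_neg (by simp only; omega)]
    | succ j ih => rw [← add_assoc, blockPos, ih (by omega), if_pos hj]

lemma tendsto_sum_range_atTop (hm : ∀ k, 0 < m k) :
    Tendsto (fun k => ∑ i ∈ Finset.range k, m i) atTop atTop :=
  StrictMono.tendsto_atTop <| strictMono_nat_of_lt_succ fun k => by
    rw [Finset.sum_range_succ]; exact Nat.lt_add_of_pos_right (hm k)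

lemma blockPos_sum (hm : ∀ k, 0 < m k) (k : ℕ) :
    blockPos m (∑ i ∈ Finset.range k, m i) = (k, 0) :=
  blockPos_sum_add hm k 0 (hm k)

lemma tendsto_blockPos_fst (hm : ∀ k, 0 < m k) :
    Tendsto (fun n => (blockPos m n).1) atTop atTop := by
  refine tendsto_atTop_atTop_of_monotone (monotone_nat_of_le_succ fun n => ?_) fun k =>
    ⟨_, (congrArg Prod.fst (blockPos_sum hm k)).ge⟩
  rw [blockPos]
  split_ifs
  exacts [le_rfl, Nat.le_succ _]

end blockPos

section LimitShadowing

variable {X : Type*} {T : X → X} {A : Set X}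

/-- The limit shadowing property of `T` on a set `A`: every sequence in `A` that is asymptotically
an orbit of `T` is asymptotic to the orbit of some point of `A`. -/
def HasLimitShadowing [UniformSpace X] (T : X → X) (A : Set X) : Prop :=
  ∀ y : ℕ → X, (∀ n, y n ∈ A) → Tendsto (fun n => (T (y n), y (n + 1))) atTop (𝓤 X) →
    ∃ a ∈ A, Tendsto (fun n => (T^[n] a, y n)) atTop (𝓤 X)

/-- The upper limit of an observable `f` along the forward orbit of `a` under `T`. -/
noncomputable def orbitLimsup (T : X → X) (f : X → ℝ) (a : X) : ℝ :=
  limsup (fun n => f (T^[n] a)) atTop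

/-- Runs through the orbit segments `a k, T (a k), …, T^[m k - 1] (a k)` one after the other, for
`k = 0, 1, …`. -/
def concatOrbits (T : X → X) (a : ℕ → X) (m : ℕ → ℕ) (n : ℕ) : X :=
  T^[(blockPos m n).2] (a (blockPos m n).1)

lemma concatOrbits_sum {m : ℕ → ℕ} (hm : ∀ k, 0 < m k) (a : ℕ → X) (k : ℕ) :
    concatOrbits T a m (∑ i ∈ Finset.range k, m i) = a k := by
  rw [concatOrbits, blockPos_sum hm, Function.iterate_zero_apply]

lemma apply_concatOrbits {m : ℕ → ℕ} (hm : ∀ k, 0 < m k) (a : ℕ → X) (n : ℕ) :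
    T (concatOrbits T a m n) = concatOrbits T a m (n + 1) ∨
      T (concatOrbits T a m n) = T^[m (blockPos m n).1] (a (blockPos m n).1) ∧
        concatOrbits T a m (n + 1) = a ((blockPos m n).1 + 1) := by
  have hlt := blockPos_snd_lt hm n
  simp only [concatOrbits, blockPos, ← Function.iterate_succ_apply' T]
  split_ifs with h
  · exact Or.inl rfl
  · refine Or.inr ⟨?_, rfl⟩
    rw [show (blockPos m n).2.succ = m (blockPos m n).1 by omega]

variable [UniformSpace X]

lemma tendsto_concatOrbits {a : ℕ → X} {m : ℕ → ℕ} (hm : ∀ k, 0 < m k) {x : X}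
    (hstart : Tendsto a atTop (𝓝 x)) (hend : Tendsto (fun k => T^[m k] (a k)) atTop (𝓝 x)) :
    Tendsto (fun n => (T (concatOrbits T a m n), concatOrbits T a m (n + 1))) atTop (𝓤 X) := by
  have hjump : Tendsto (fun k => (T^[m k] (a k), a (k + 1))) atTop (𝓤 X) :=
    (hend.prodMk_nhds ((tendsto_add_atTop_iff_nat 1).2 hstart)).mono_right (nhds_le_uniformity x)
  refine tendsto_def.2 fun V hV => ?_
  filter_upwards [(hjump.comp (tendsto_blockPos_fst hm)).eventually_mem hV] with n hn
  rcases apply_concatOrbits (T := T) hm a n with h | ⟨hT, hnext⟩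
  · rw [mem_preimage, h]
    exact refl_mem_uniformity hV
  · rw [mem_preimage, hT, hnext]
    exact hn

variable [CompactSpace X] {f : X → ℝ}

lemma exists_recurrent_of_mem_closure (hf : Continuous f) (hA : MapsTo T A A) {l : ℝ}
    (hl : l ∈ closure (orbitLimsup T f '' A)) :
    ∃ x, f x = l ∧ ∀ U ∈ 𝓝 x, ∀ b > l, ∃ a ∈ A, ∃ m > 0,
      a ∈ U ∧ T^[m] a ∈ U ∧ ∀ n, f (T^[n] a) < b := by
  set C : Set X := {c | ∃ a ∈ A, MapClusterPt c atTop (fun n => T^[n] a) ∧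
    f c = orbitLimsup T f a}
  have hsub : orbitLimsup T f '' A ⊆ f '' C := by
    rintro _ ⟨a, ha, rfl⟩
    obtain ⟨c, hc, hfc⟩ := (isGreatest_limsup_comp (u := fun n => T^[n] a) (F := atTop) hf).1
    exact ⟨c, ⟨a, ha, hc, hfc⟩, hfc⟩
  obtain ⟨x, hx, rfl⟩ := hf.isClosedMap.closure_image_subset C (closure_mono hsub hl)
  refine ⟨x, rfl, fun U hU b hb => ?_⟩
  have hU' : interior U ∩ f ⁻¹' Iio b ∈ 𝓝 x :=
    inter_mem (interior_mem_nhds.2 hU) (hf.continuousAt (Iio_mem_nhds hb))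
  obtain ⟨c, ⟨hcU, hcb⟩, a, ha, hc, hfc⟩ := mem_closure_iff_nhds.1 hx _ hU'
  have hreturn : ∃ᶠ n in atTop, T^[n] a ∈ U :=
    hc.frequently (mem_of_superset (isOpen_interior.mem_nhds hcU) interior_subset)
  have hsmall : ∀ᶠ n in atTop, f (T^[n] a) < b := by
    refine eventually_lt_of_limsup_lt (hfc.symm.trans_lt hcb) ?_
    obtain ⟨B, hB⟩ := (isCompact_range hf).bddAbove
    exact isBoundedUnder_of ⟨B, fun n => hB ⟨_, rfl⟩⟩
  obtain ⟨N, hN⟩ := eventually_atTop.1 hsmall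
  obtain ⟨p, hpN, hp⟩ := frequently_atTop.1 hreturn N
  obtain ⟨q, hpq, hq⟩ := frequently_atTop.1 hreturn (p + 1)
  refine ⟨T^[p] a, hA.iterate p ha, q - p, by omega, hp, ?_, fun n => ?_⟩
  · rwa [← Function.iterate_add_apply, Nat.sub_add_cancel (by omega)]
  · rw [← Function.iterate_add_apply]
    exact hN _ (by omega)

theorem HasLimitShadowing.isClosed_image_orbitLimsup [IsCountablyGenerated (𝓤 X)]
    (hT : HasLimitShadowing T A) (hA : MapsTo T A A) (hf : Continuous f) :
    IsClosed (orbitLimsup T f '' A) := by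
  refine isClosed_of_closure_subset fun l hl => ?_
  obtain ⟨x, rfl, hx⟩ := exists_recurrent_of_mem_closure hf hA hl
  obtain ⟨U, hU⟩ := (𝓝 x).exists_antitone_basis
  obtain ⟨b, -, hb, hblim⟩ := exists_seq_strictAnti_tendsto (f x)
  choose a ha m hm hstart hend hlt using fun k => hx (U k) (hU.1.mem_of_mem trivial) (b k) (hb k)
  set y := concatOrbits T a m with hy
  obtain ⟨c, hc, hcy⟩ := hT y (fun n => hA.iterate _ (ha _))
    (tendsto_concatOrbits hm (hU.tendsto hstart) (hU.tendsto hend))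
  refine ⟨c, hc, (limsup_comp_eq_of_tendsto_uniformity hf hcy).trans ?_⟩
  have hgreatest := isGreatest_limsup_comp (u := y) (F := atTop) hf
  refine le_antisymm ?_ (hgreatest.2 ⟨x, ?_, rfl⟩)
  · obtain ⟨z, hz, hfz⟩ := hgreatest.1
    rw [← hfz]
    refine le_of_forall_gt_imp_ge_of_dense fun d hd => ?_
    have hsmall : ∀ᶠ n in atTop, f (y n) < d :=
      ((tendsto_blockPos_fst hm).eventually (hblim.eventually_lt_const hd)).mono
        fun n hn => (hlt _ _).trans hn
    by_contra! hdz
    obtain ⟨n, hn, hn'⟩ := ((hz.continuousAt_comp hf.continuousAt).frequently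
      (Ioi_mem_nhds hdz)).and_eventually hsmall |>.exists
    exact lt_asymm hn hn'
  · refine MapClusterPt.of_comp (tendsto_sum_range_atTop hm) (Tendsto.mapClusterPt ?_)
    simpa only [Function.comp_def, hy, concatOrbits_sum hm] using hU.tendsto hstart

end LimitShadowing

section seqShift

/-- The left shift on sequences, as an endomorphism of the `R`-module `ℕ → M`: evaluating a
polynomial at it gives the linear recurrence operator with that characteristic polynomial. -/
def seqShift (R M : Type*) [Semiring R] [AddCommMonoid M] [Module R M] : Module.End R (ℕ → M) :=
  LinearMap.funLeft R M (· + 1)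

lemma seqShift_pow_apply {R M : Type*} [Semiring R] [AddCommMonoid M] [Module R M]
    (i : ℕ) (z : ℕ → M) (n : ℕ) : (seqShift R M ^ i) z n = z (n + i) := by
  induction i generalizing n with
  | zero => rfl
  | succ i ih =>
    rw [pow_succ', Module.End.mul_apply, seqShift, LinearMap.funLeft_apply, ← seqShift, ih,
      add_right_comm, add_assoc]

variable {R M N : Type*} [CommRing R] [AddCommGroup M] [Module R M] [AddCommGroup N] [Module R N]

lemma aeval_seqShift_apply (P : R[X]) (z : ℕ → M) (n : ℕ) :
    aeval (seqShift R M) P z n = P.sum fun i c => c • z (n + i) := by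
  simp only [aeval_eq_sum_range, LinearMap.sum_apply, Finset.sum_apply, LinearMap.smul_apply,
    Pi.smul_apply, seqShift_pow_apply]
  rw [P.sum_over_range (by simp)]

lemma aeval_seqShift_comp (φ : M →ₗ[R] N) (P : R[X]) (z : ℕ → M) (n : ℕ) :
    aeval (seqShift R N) P (fun k => φ (z k)) n = φ (aeval (seqShift R M) P z n) := by
  simp only [aeval_seqShift_apply, Polynomial.sum, map_sum, map_smul]

lemma aeval_seqShift_map {S : Type*} [CommRing S] [Algebra R S] [Module S M]
    [IsScalarTower R S M] (P : R[X]) (z : ℕ → M) (n : ℕ) :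
    aeval (seqShift S M) (P.map (algebraMap R S)) z n = aeval (seqShift R M) P z n := by
  rw [aeval_seqShift_apply, aeval_seqShift_apply, Polynomial.sum_over_range' _ _ (P.natDegree + 1)
    (Nat.lt_succ_of_le natDegree_map_le), Polynomial.sum_over_range]
  all_goals simp

lemma aeval_seqShift_mul_pow {S : Type*} [CommRing S] [Algebra R S] (P : R[X]) (ξ a : S) (n : ℕ) :
    aeval (seqShift R S) P (fun k => ξ * a ^ k) n = ξ * a ^ n * aeval a P := by
  rw [aeval_seqShift_apply, aeval_def, eval₂_eq_sum, Polynomial.sum, Polynomial.sum,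
    Finset.mul_sum]
  refine Finset.sum_congr rfl fun i _ => ?_
  rw [Algebra.smul_def, pow_add]
  ring

lemma aeval_seqShift_X_sub_C_apply (a : R) (z : ℕ → M) (n : ℕ) :
    aeval (seqShift R M) (X - C a) z n = z (n + 1) - a • z n := by
  rw [map_sub, aeval_X, aeval_C]
  rfl

/-- The solution with vanishing initial values of the linear recurrence with monic characteristic
polynomial `P` and right-hand side `s`. -/
def recurrenceSolution (P : R[X]) (s : ℕ → M) (n : ℕ) : M :=
  if n < P.natDegree then 0 else
    s (n - P.natDegree) - ∑ i : Fin P.natDegree,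
      P.coeff i • recurrenceSolution P s (n - P.natDegree + i)
termination_by n
decreasing_by omega

lemma aeval_seqShift_recurrenceSolution {P : R[X]} (hP : P.Monic) (s : ℕ → M) :
    aeval (seqShift R M) P (recurrenceSolution P s) = s := by
  ext n
  have hrec : recurrenceSolution P s (n + P.natDegree) =
      s n - ∑ i : Fin P.natDegree, P.coeff i • recurrenceSolution P s (n + i) := by
    rw [recurrenceSolution, if_neg (by omega), Nat.add_sub_cancel]
  rw [aeval_seqShift_apply, P.sum_over_range (by simp), Finset.sum_range_succ,
    hP.coeff_natDegree, one_smul, hrec, Finset.sum_range, add_sub_cancel]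

lemma surjective_aeval_seqShift {P : R[X]} (hP : P.Monic) :
    Function.Surjective (aeval (seqShift R M) P) :=
  fun s => ⟨_, aeval_seqShift_recurrenceSolution hP s⟩

end seqShift

section Asymptotics

lemma tendsto_zero_of_le_mul_add {r : ℝ} (hr₀ : 0 ≤ r) (hr₁ : r < 1) {u ε : ℕ → ℝ}
    (hu : ∀ n, 0 ≤ u n) (hε : Tendsto ε atTop (𝓝 0)) (h : ∀ n, u (n + 1) ≤ r * u n + ε n) :
    Tendsto u atTop (𝓝 0) := by
  refine tendsto_order.2 ⟨fun b hb => .of_forall fun n => hb.trans_le (hu n), fun c hc => ?_⟩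
  obtain ⟨N, hN⟩ := eventually_atTop.1
    (hε.eventually_lt_const (mul_pos (sub_pos.2 hr₁) (half_pos hc)))
  have hgeom (j : ℕ) : u (N + j) - c / 2 ≤ r ^ j * (u N - c / 2) :=
    le_geom (u := fun j => u (N + j) - c / 2) hr₀ j fun k _ => by
      have := h (N + k)
      have := hN (N + k) (by omega)
      rw [← add_assoc]
      linarith
  have hlim : Tendsto (fun j => r ^ j * (u N - c / 2)) atTop (𝓝 0) := by
    simpa using (tendsto_pow_atTop_nhds_zero_of_lt_one hr₀ hr₁).mul_const (u N - c / 2)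
  rw [← map_add_atTop_eq_nat N, eventually_map]
  filter_upwards [hlim.eventually_lt_const (half_pos hc)] with j hj
  rw [add_comm]
  linarith [hgeom j]

variable {K : Type*} [NormedField K]

lemma tendsto_zero_of_contracting {β : K} (hβ : ‖β‖ < 1) {t : ℕ → K}
    (h : Tendsto (fun n => t (n + 1) - β * t n) atTop (𝓝 0)) : Tendsto t atTop (𝓝 0) := by
  refine tendsto_zero_iff_norm_tendsto_zero.2 <| tendsto_zero_of_le_mul_add (norm_nonneg β) hβ
    (fun n => norm_nonneg (t n)) (tendsto_zero_iff_norm_tendsto_zero.1 h) fun n => ?_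
  rw [← norm_mul]
  simpa using norm_add_le (β * t n) (t (n + 1) - β * t n)

lemma tendsto_zero_of_tendsto_aeval_seqShift {Q : K[X]} (hmonic : Q.Monic) (hsplits : Q.Splits)
    (hroots : ∀ β ∈ Q.roots, ‖β‖ < 1) {t : ℕ → K}
    (h : Tendsto (aeval (seqShift K K) Q t) atTop (𝓝 0)) : Tendsto t atTop (𝓝 0) := by
  rw [hsplits.eq_prod_roots_of_monic hmonic] at h
  generalize Q.roots = s at h hroots
  induction s using Multiset.induction_on with
  | empty => simpa using h
  | cons β s ih =>
    refine ih (tendsto_zero_of_contracting (hroots β (Multiset.mem_cons_self β s)) ?_)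
      fun γ hγ => hroots γ (Multiset.mem_cons_of_mem hγ)
    rw [Multiset.map_cons, Multiset.prod_cons, map_mul, Module.End.mul_apply] at h
    exact h.congr (aeval_seqShift_X_sub_C_apply β _)

/-- The bounded solution `-∑ k, ε (n + k) / a ^ (k + 1)` of the recurrence. -/
lemma exists_tendsto_zero_recurrence [CompleteSpace K] {a : K} (ha : 1 < ‖a‖) {ε : ℕ → K}
    (hε : Tendsto ε atTop (𝓝 0)) :
    ∃ t : ℕ → K, Tendsto t atTop (𝓝 0) ∧ ∀ n, t (n + 1) = a * t n + ε n := by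
  have ha₀ : a ≠ 0 := norm_pos_iff.1 (zero_lt_one.trans ha)
  obtain ⟨M, hM⟩ := isBounded_iff_forall_norm_le.1 (Metric.isBounded_range_of_tendsto ε hε)
  have hsum : Summable fun k : ℕ => M * ‖a⁻¹‖ ^ (k + 1) :=
    ((summable_nat_add_iff 1).2 <| summable_geometric_of_lt_one (norm_nonneg _)
      (by rw [norm_inv]; exact inv_lt_one_of_one_lt₀ ha)).mul_left M
  have hbound (n k : ℕ) : ‖ε (n + k) * a⁻¹ ^ (k + 1)‖ ≤ M * ‖a⁻¹‖ ^ (k + 1) := by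
    rw [norm_mul, norm_pow]
    gcongr
    exact hM _ ⟨_, rfl⟩
  refine ⟨fun n => -∑' k, ε (n + k) * a⁻¹ ^ (k + 1), ?_, fun n => ?_⟩
  · have hterm (k : ℕ) : Tendsto (fun n => ε (n + k) * a⁻¹ ^ (k + 1)) atTop (𝓝 0) := by
      simpa using ((tendsto_add_atTop_iff_nat k).2 hε).mul_const (a⁻¹ ^ (k + 1))
    simpa using (tendsto_tsum_of_dominated_convergence hsum hterm (.of_forall hbound)).neg
  · have hsummable := Summable.of_norm_bounded hsum (hbound n)
    have hshift : ∑' k, ε (n + 1 + k) * a⁻¹ ^ (k + 1) =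
        a * ∑' k, ε (n + (k + 1)) * a⁻¹ ^ (k + 1 + 1) := by
      rw [← tsum_mul_left]
      refine tsum_congr fun k => ?_
      rw [add_right_comm, add_assoc, pow_succ _ (k + 1)]
      field_simp
    simp only [hshift, hsummable.tsum_eq_zero_add, zero_add, pow_one, add_zero]
    field_simp
    ring

lemma exists_tendsto_sub_mul_pow_of_expanding [CompleteSpace K] {a : K} (ha : 1 < ‖a‖) {z : ℕ → K}
    (h : Tendsto (fun n => z (n + 1) - a * z n) atTop (𝓝 0)) :
    ∃ ξ : K, Tendsto (fun n => z n - ξ * a ^ n) atTop (𝓝 0) := by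
  obtain ⟨t, ht, hrec⟩ := exists_tendsto_zero_recurrence ha h
  have hgeom (n : ℕ) : t n = z n - (z 0 - t 0) * a ^ n := by
    induction n with
    | zero => ring
    | succ n ih => rw [hrec, ih]; ring
  exact ⟨z 0 - t 0, ht.congr hgeom⟩

lemma exists_tendsto_sub_mul_pow_of_tendsto_aeval_seqShift [CompleteSpace K] {a : K}
    (ha : 1 < ‖a‖) {Q : K[X]} (hmonic : Q.Monic) (hsplits : Q.Splits)
    (hroots : ∀ β ∈ Q.roots, ‖β‖ < 1) {z : ℕ → K}
    (h : Tendsto (aeval (seqShift K K) ((X - C a) * Q) z) atTop (𝓝 0)) :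
    ∃ ξ : K, Tendsto (fun n => z n - ξ * a ^ n) atTop (𝓝 0) := by
  rw [mul_comm, map_mul, Module.End.mul_apply] at h
  have hcontract := tendsto_zero_of_tendsto_aeval_seqShift hmonic hsplits hroots h
  exact exists_tendsto_sub_mul_pow_of_expanding ha
    (hcontract.congr (aeval_seqShift_X_sub_C_apply a z))

end Asymptotics

section ModOne

/-- The reduction modulo one `ℝ → ℝ / ℤ`, as a `ℤ`-linear map, so that it commutes with integer
recurrence operators. -/
def modOne : ℝ →ₗ[ℤ] UnitAddCircle :=
  (QuotientAddGroup.mk' (AddSubgroup.zmultiples (1 : ℝ))).toIntLinearMap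

lemma modOne_apply (x : ℝ) : modOne x = (x : UnitAddCircle) := rfl

lemma continuous_modOne : Continuous modOne := AddCircle.continuous_mk' 1

lemma surjective_modOne : Function.Surjective modOne := QuotientAddGroup.mk_surjective

lemma modOne_intCast (k : ℤ) : modOne k = 0 := by
  rw [modOne_apply, AddCircle.coe_eq_zero_iff]
  exact ⟨k, by simp⟩

lemma norm_modOne (x : ℝ) : ‖modOne x‖ = distNearestInt x := UnitAddCircle.norm_eq

lemma exists_lift_tendsto_aeval_seqShift {P : ℤ[X]} (hP : P.Monic) {e : ℕ → UnitAddCircle}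
    (he : Tendsto (aeval (seqShift ℤ UnitAddCircle) P e) atTop (𝓝 0)) :
    ∃ z : ℕ → ℝ, (∀ n, modOne (z n) = e n) ∧
      Tendsto (aeval (seqShift ℤ ℝ) P z) atTop (𝓝 0) := by
  -- Any lift is corrected by the integer solution of the recurrence whose right-hand side is the
  -- rounded value of the recurrence at the lift.
  choose r hr using fun n => surjective_modOne (e n)
  set σ := aeval (seqShift ℤ ℝ) P r
  obtain ⟨u, hu⟩ := surjective_aeval_seqShift hP fun n => round (σ n)
  have hσ (n : ℕ) : modOne (σ n) = aeval (seqShift ℤ UnitAddCircle) P e n := by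
    rw [← aeval_seqShift_comp]
    simp only [hr]
  refine ⟨r - fun n => (u n : ℝ), fun n => ?_, ?_⟩
  · rw [Pi.sub_apply, map_sub, hr, modOne_intCast, sub_zero]
  · rw [tendsto_zero_iff_norm_tendsto_zero] at he ⊢
    refine he.congr fun n => ?_
    have hround : aeval (seqShift ℤ ℝ) P (fun n => (u n : ℝ)) n = round (σ n) := by
      rw [← congrFun hu n]
      exact aeval_seqShift_comp (Int.castAddHom ℝ).toIntLinearMap P u n
    rw [map_sub, Pi.sub_apply, hround, ← hσ, norm_modOne]
    rfl

end ModOne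

section Conjugates

variable {α : ℝ}

lemma exists_map_minpoly_eq (hint : IsIntegral ℤ α)
    (hconj : ∀ z : ℂ, aeval z (minpoly ℤ α) = 0 → z ≠ α → ‖z‖ < 1) :
    ∃ Q : ℂ[X], Q.Monic ∧ (∀ β ∈ Q.roots, ‖β‖ < 1) ∧
      (minpoly ℤ α).map (algebraMap ℤ ℂ) = (X - C (α : ℂ)) * Q := by
  set P := (minpoly ℤ α).map (algebraMap ℤ ℂ) with hP
  have hroot : P.IsRoot α := by
    rw [IsRoot.def, hP, eval_map_algebraMap, ← Complex.coe_algebraMap, aeval_algebraMap_apply,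
      minpoly.aeval, map_zero]
  have hseparable : P.Separable := by
    rw [hP, IsScalarTower.algebraMap_eq ℤ ℚ ℂ, ← Polynomial.map_map,
      ← minpoly.isIntegrallyClosed_eq_field_fractions' ℚ hint]
    exact (minpoly.irreducible hint.tower_top).separable.map
  obtain ⟨Q, hQ⟩ := dvd_iff_isRoot.2 hroot
  have hmonic : Q.Monic := (monic_X_sub_C (α : ℂ)).of_mul_monic_left
    (hQ ▸ (minpoly.monic hint).map (algebraMap ℤ ℂ))
  refine ⟨Q, hmonic, fun β hβ => hconj β ?_ ?_, hQ⟩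
  · rw [← eval_map_algebraMap, ← hP, hQ, eval_mul, (isRoot_of_mem_roots hβ).eq_zero, mul_zero]
  · rintro rfl
    obtain ⟨s, t, hst⟩ := (hQ ▸ hseparable).isCoprime
    simpa [(isRoot_of_mem_roots hβ).eq_zero] using congrArg (eval (α : ℂ)) hst

lemma exists_tendsto_sub_mul_pow_of_conjugates (hα : 1 < |α|) (hint : IsIntegral ℤ α)
    (hconj : ∀ z : ℂ, aeval z (minpoly ℤ α) = 0 → z ≠ α → ‖z‖ < 1) {z : ℕ → ℝ}
    (hz : Tendsto (aeval (seqShift ℤ ℝ) (minpoly ℤ α) z) atTop (𝓝 0)) :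
    ∃ ξ : ℝ, Tendsto (fun n => z n - ξ * α ^ n) atTop (𝓝 0) := by
  obtain ⟨Q, hmonic, hroots, hfactor⟩ := exists_map_minpoly_eq hint hconj
  have hcomplex : Tendsto (aeval (seqShift ℂ ℂ) ((X - C (α : ℂ)) * Q) fun n => (z n : ℂ))
      atTop (𝓝 0) := by
    rw [← hfactor, ← Complex.ofReal_zero]
    refine ((Complex.continuous_ofReal.tendsto 0).comp hz).congr fun n => ?_
    rw [aeval_seqShift_map]
    exact (aeval_seqShift_comp (Complex.ofRealHom.toAddMonoidHom.toIntLinearMap) _ z n).symm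
  obtain ⟨ξ, hξ⟩ := exists_tendsto_sub_mul_pow_of_tendsto_aeval_seqShift
    (by rwa [Complex.norm_real]) hmonic (IsAlgClosed.splits Q) hroots hcomplex
  refine ⟨ξ.re, ((Complex.continuous_re.tendsto 0).comp hξ).congr fun n => ?_⟩
  rw [Function.comp_apply, Complex.sub_re, Complex.ofReal_re, ← Complex.ofReal_pow,
    Complex.re_mul_ofReal]

end Conjugates

section Spectrum

/-- The sequence `ξ, ξα, ξα², …` modulo one; the spectrum of `α` is read off the orbits of these
sequences under the shift. -/
noncomputable def geomModOne (α ξ : ℝ) (n : ℕ) : UnitAddCircle := modOne (ξ * α ^ n)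

variable {α : ℝ}

lemma iterate_seqShift_geomModOne (α ξ : ℝ) (n : ℕ) :
    (seqShift ℤ UnitAddCircle)^[n] (geomModOne α ξ) = geomModOne α (ξ * α ^ n) := by
  ext i
  rw [← Module.End.pow_apply, seqShift_pow_apply, geomModOne, geomModOne, add_comm, pow_add,
    mul_assoc]

lemma aeval_seqShift_minpoly_geomModOne (α ξ : ℝ) :
    aeval (seqShift ℤ UnitAddCircle) (minpoly ℤ α) (geomModOne α ξ) = 0 := by
  ext n
  have hcomp := aeval_seqShift_comp modOne (minpoly ℤ α) (fun k => ξ * α ^ k) n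
  rwa [aeval_seqShift_mul_pow, minpoly.aeval, mul_zero, map_zero] at hcomp

lemma tendsto_uniformity_pi_iff {ι κ G : Type*} [AddCommGroup G] [UniformSpace G]
    [IsUniformAddGroup G] {F : Filter κ} {x y : κ → ι → G} :
    Tendsto (fun n => (x n, y n)) F (𝓤 (ι → G)) ↔
      ∀ i, Tendsto (fun n => y n i - x n i) F (𝓝 0) := by
  simp only [uniformity_eq_comap_nhds_zero, tendsto_comap_iff, tendsto_pi_nhds]
  rfl

lemma tendsto_sub_apply_zero_of_pseudoOrbit {G : Type*} [AddCommGroup G] [TopologicalSpace G]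
    [ContinuousAdd G] {y : ℕ → ℕ → G}
    (h : ∀ i, Tendsto (fun n => y (n + 1) i - y n (i + 1)) atTop (𝓝 0)) (i : ℕ) :
    Tendsto (fun n => y (n + i) 0 - y n i) atTop (𝓝 0) := by
  induction i with
  | zero => simp [tendsto_const_nhds]
  | succ i ih =>
    have hadd := (ih.comp (tendsto_add_atTop_nat 1)).add (h i)
    rw [add_zero] at hadd
    refine hadd.congr fun n => ?_
    rw [Function.comp_apply, sub_add_sub_cancel, add_right_comm, add_assoc n i 1]

lemma hasLimitShadowing_seqShift_range_geomModOne (hα : 1 < |α|) (hint : IsIntegral ℤ α)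
    (hconj : ∀ z : ℂ, aeval z (minpoly ℤ α) = 0 → z ≠ α → ‖z‖ < 1) :
    HasLimitShadowing (seqShift ℤ UnitAddCircle) (range (geomModOne α)) := by
  intro y hy hpseudo
  have hdiag := tendsto_sub_apply_zero_of_pseudoOrbit (tendsto_uniformity_pi_iff.1 hpseudo)
  have hrec : Tendsto (aeval (seqShift ℤ UnitAddCircle) (minpoly ℤ α) fun n => y n 0)
      atTop (𝓝 0) := by
    have hsum := tendsto_finsetSum (minpoly ℤ α).support
      fun i _ => (hdiag i).const_smul ((minpoly ℤ α).coeff i)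
    simp only [smul_zero, Finset.sum_const_zero] at hsum
    refine hsum.congr fun n => ?_
    obtain ⟨ξ, hξ⟩ := hy n
    have hzero : aeval (seqShift ℤ UnitAddCircle) (minpoly ℤ α) (y n) 0 = 0 := by
      rw [← hξ, aeval_seqShift_minpoly_geomModOne, Pi.zero_apply]
    calc ∑ i ∈ (minpoly ℤ α).support, (minpoly ℤ α).coeff i • (y (n + i) 0 - y n i)
      _ = aeval (seqShift ℤ UnitAddCircle) (minpoly ℤ α) (fun k => y k 0) n -
          aeval (seqShift ℤ UnitAddCircle) (minpoly ℤ α) (y n) 0 := by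
        simp only [aeval_seqShift_apply, Polynomial.sum, zero_add, smul_sub,
          Finset.sum_sub_distrib]
      _ = aeval (seqShift ℤ UnitAddCircle) (minpoly ℤ α) (fun k => y k 0) n := by
        rw [hzero, sub_zero]
  obtain ⟨z, hze, hz⟩ := exists_lift_tendsto_aeval_seqShift (minpoly.monic hint) hrec
  obtain ⟨ξ, hξ⟩ := exists_tendsto_sub_mul_pow_of_conjugates hα hint hconj hz
  have hshadow : Tendsto (fun n => y n 0 - geomModOne α ξ n) atTop (𝓝 0) := by
    have hmod := (continuous_modOne.tendsto 0).comp hξ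
    rw [map_zero] at hmod
    exact hmod.congr fun n => by rw [Function.comp_apply, map_sub, hze, geomModOne]
  refine ⟨_, ⟨ξ, rfl⟩, tendsto_uniformity_pi_iff.2 fun i => ?_⟩
  have hsub := ((tendsto_add_atTop_iff_nat i).2 hshadow).sub (hdiag i)
  rw [sub_zero] at hsub
  refine hsub.congr fun n => ?_
  rw [← Module.End.pow_apply, seqShift_pow_apply, add_comm i n]
  abel

lemma mapsTo_seqShift_range_geomModOne (α : ℝ) :
    MapsTo (seqShift ℤ UnitAddCircle) (range (geomModOne α)) (range (geomModOne α)) := by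
  rintro _ ⟨ξ, rfl⟩
  exact ⟨_, (iterate_seqShift_geomModOne α ξ 1).symm⟩

theorem isClosed_range_limsup_modOne_mul_pow (hα : 1 < |α|) (hint : IsIntegral ℤ α)
    (hconj : ∀ z : ℂ, aeval z (minpoly ℤ α) = 0 → z ≠ α → ‖z‖ < 1)
    {g : UnitAddCircle → ℝ} (hg : Continuous g) :
    IsClosed (range fun ξ : ℝ => limsup (fun n : ℕ => g (modOne (ξ * α ^ n))) atTop) := by
  have hshadowing := hasLimitShadowing_seqShift_range_geomModOne hα hint hconj
  have hclosed := hshadowing.isClosed_image_orbitLimsup (mapsTo_seqShift_range_geomModOne α)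
    (hg.comp (continuous_apply 0))
  rw [← range_comp] at hclosed
  convert hclosed using 2
  ext ξ
  simp only [Function.comp_apply, orbitLimsup, iterate_seqShift_geomModOne, geomModOne, pow_zero,
    mul_one]

lemma limsupDist_eq_limsup_norm_modOne (α ξ : ℝ) :
    limsupDist α ξ = limsup (fun n : ℕ => ‖modOne (ξ * α ^ n)‖) atTop := by
  simp only [limsupDist, norm_modOne]

lemma limsupDist_mem_Icc (α ξ : ℝ) : limsupDist α ξ ∈ Icc 0 (1 / 2) := by
  obtain ⟨x, -, hx⟩ := (isGreatest_limsup_comp (F := atTop)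
    (u := fun n : ℕ => modOne (ξ * α ^ n)) continuous_norm).1
  rw [limsupDist_eq_limsup_norm_modOne]
  simp only [Function.comp_def] at hx
  rw [← hx]
  exact ⟨norm_nonneg x, by simpa using AddCircle.norm_le_half_period 1 one_ne_zero⟩

end Spectrum

theorem stmt0_general (α : ℝ) (hα : 1 < |α|) (hint : IsIntegral ℤ α)
    (hconj : ∀ z : ℂ, aeval z (minpoly ℤ α) = 0 → z ≠ α → ‖z‖ < 1) :
    IsClosed (specL α) ∧ specL α ⊆ Icc 0 (1 / 2) := by
  refine ⟨?_, range_subset_iff.2 (limsupDist_mem_Icc α)⟩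
  have hclosed := isClosed_range_limsup_modOne_mul_pow hα hint hconj continuous_norm
  simp only [← limsupDist_eq_limsup_norm_modOne] at hclosed
  exact hclosed

theorem stmt0 (α : ℝ) (hα : IsPisot α) :
    IsClosed (specL α) ∧ specL α ⊆ Set.Icc 0 (1 / 2) :=
  stmt0_general α (hα.1.trans_le (le_abs_self α)) hα.2.1 hα.2.2
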